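/- There are exactly 30 isomorphism classes of finite simple graphs G on 9 vertices with Δ(G) = 4, χ(G) = 3, ivs_χ(G) = 3 and vs_χ(G) = 2. -/

import Mathlib

/-- The chromatic number of `G` as a natural number. -/
noncomputable def chi {V : Type*} [Fintype V] (G : SimpleGraph V) : ℕ :=
  G.chromaticNumber.toNat

/-- The maximum degree of `G` (classical version, no decidability assumptions). -/
noncomputable def maxDeg {V : Type*} [Fintype V] (G : SimpleGraph V) : ℕ :=
  @SimpleGraph.maxDegree V G _ (Classical.decRel _)

/-- The degree of a vertex `v` of `G` (classical version). -/
noncomputable def deg {V : Type*} [Fintype V] (G : SimpleGraph V) (v : V) : ℕ :=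
  @SimpleGraph.degree V G v (@SimpleGraph.neighborSetFintype V G _ (Classical.decRel _) v)

/-- The chromatic vertex stability of `G`: the minimum size of a set `S` of vertices
such that the subgraph induced on the complement of `S` has chromatic number `χ(G) - 1`. -/
noncomputable def vsChi {V : Type*} [Fintype V] [DecidableEq V] (G : SimpleGraph V) : ℕ :=
  sInf {n : ℕ | ∃ S : Finset V, S.card = n ∧
    chi (G.induce (↑(Sᶜ) : Set V)) = chi G - 1}

/-- The independent chromatic vertex stability of `G`: the minimum size of an independent
set `S` of vertices such that the subgraph induced on the complement of `S` has chromatic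
number `χ(G) - 1`. -/
noncomputable def ivsChi {V : Type*} [Fintype V] [DecidableEq V] (G : SimpleGraph V) : ℕ :=
  sInf {n : ℕ | ∃ S : Finset V, S.card = n ∧
    (∀ x ∈ S, ∀ y ∈ S, ¬ G.Adj x y) ∧
    chi (G.induce (↑(Sᶜ) : Set V)) = chi G - 1}

/-!
Removing an independent set that lowers `χ` amounts to removing a color class of an optimal
coloring. So on `9 = 3 · 3` vertices `χ = ivs_χ = 3` says that `G` is `3`-colorable and that every
`3`-coloring has three classes of size `3`. Given this, `vs_χ = 2` says that deleting some pair of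
vertices leaves a bipartite graph, and such a pair is always an edge, as it would otherwise be a
color class of size at most `2`.

Let `uv` be such an edge. As `Δ ≤ 4`, the vertex `u` has at most three neighbors besides `v`, hence
a single one, `x`, on some side of the bipartition. Moving `u` to that side and deleting `x` instead
shows that `xv` is such an edge as well. The same applies to `v`, and since `G` contains no `K₄`,
some bipartition has a side which together with `u` and `v` spans a triangle and isolated vertices.
Thus `G` is given by the neighborhoods of the triangle vertices and of the isolated vertices in the
independent other side. Recoloring arguments show that the triangle vertices have degree `4` and
that the independent side has three or four vertices, which leaves a small enumeration. The
resulting graphs are told apart by their numbers of walks of length six.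
-/

open Finset SimpleGraph

section Stability

variable {V : Type*} [Fintype V] {G : SimpleGraph V} {n k : ℕ}

theorem chi_le_iff_colorable : chi G ≤ n ↔ G.Colorable n := by
  have h : G.chromaticNumber ≠ ⊤ := chromaticNumber_ne_top_iff_exists.2 ⟨_, G.colorable_of_fintype⟩
  rw [← chromaticNumber_le_iff_colorable, chi, ← ENat.natCast_toNat h, Nat.cast_le,
    ENat.toNat_natCast]

theorem chi_eq_succ_iff : chi G = n + 1 ↔ G.Colorable (n + 1) ∧ ¬ G.Colorable n := by
  rw [← chi_le_iff_colorable, ← chi_le_iff_colorable]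
  omega

variable [DecidableEq V]

theorem colorable_induce_compl_class (c : G.Coloring (Fin (n + 1))) (i : Fin (n + 1)) :
    (G.induce (↑(({v | c v = i} : Finset V)ᶜ) : Set V)).Colorable n := by
  have hmem : ∀ v : ↥(↑(({v | c v = i} : Finset V)ᶜ) : Set V), c v ≠ i :=
    fun v => by simpa using v.2
  let c' : (G.induce (↑(({v | c v = i} : Finset V)ᶜ) : Set V)).Coloring {j // j ≠ i} :=
    Coloring.mk (fun v => ⟨c v, hmem v⟩) fun hab he => c.valid hab (congrArg Subtype.val he)
  have hcol := c'.colorable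
  rwa [Fintype.card_subtype_compl, Fintype.card_fin, Fintype.card_subtype_eq,
    Nat.add_sub_cancel] at hcol

theorem exists_coloring_class_eq {S : Finset V} (hS : ∀ x ∈ S, ∀ y ∈ S, ¬ G.Adj x y)
    (h : (G.induce (↑(Sᶜ) : Set V)).Colorable n) :
    ∃ c : G.Coloring (Fin (n + 1)), ({v | c v = Fin.last n} : Finset V) = S := by
  obtain ⟨c⟩ := h
  have hmem : ∀ v, v ∉ S → v ∈ (↑(Sᶜ) : Set V) := by simp
  refine ⟨Coloring.mk
    (fun v => if hv : v ∈ S then Fin.last n else (c ⟨v, hmem v hv⟩).castSucc) ?_, ?_⟩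
  · intro a b hab
    by_cases ha : a ∈ S <;> by_cases hb : b ∈ S
    · exact absurd hab (hS a ha b hb)
    · simp [ha, hb, (Fin.castSucc_lt_last _).ne']
    · simp [ha, hb, (Fin.castSucc_lt_last _).ne]
    · simpa [ha, hb] using c.valid (show (G.induce _).Adj ⟨a, hmem a ha⟩ ⟨b, hmem b hb⟩ from hab)
  · ext v
    by_cases hv : v ∈ S <;> simp [hv, Coloring.mk, (Fin.castSucc_lt_last _).ne]

theorem chi_induce_compl_eq_iff (hG : chi G = n + 1) {S : Finset V}
    (hS : ∀ x ∈ S, ∀ y ∈ S, ¬ G.Adj x y) :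
    chi (G.induce (↑(Sᶜ) : Set V)) = n ↔ (G.induce (↑(Sᶜ) : Set V)).Colorable n := by
  rw [← chi_le_iff_colorable]
  refine ⟨le_of_eq, fun h => le_antisymm h ?_⟩
  obtain ⟨c, -⟩ := exists_coloring_class_eq hS (chi_le_iff_colorable.1 le_rfl)
  have := chi_le_iff_colorable.2 ⟨c⟩
  omega

theorem le_ivsChi_iff (hG : chi G = n + 1) :
    k ≤ ivsChi G ↔ ∀ (c : G.Coloring (Fin (n + 1))) (i : Fin (n + 1)), k ≤ #{v | c v = i} := by
  have hclass : ∀ (c : G.Coloring (Fin (n + 1))) (i : Fin (n + 1)),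
      ∀ x ∈ ({v | c v = i} : Finset V), ∀ y ∈ ({v | c v = i} : Finset V), ¬ G.Adj x y :=
    fun c i x hx y hy hxy => c.valid hxy (by simp_all)
  rw [ivsChi, hG, Nat.add_sub_cancel]
  constructor
  · exact fun h c i => h.trans (Nat.sInf_le ⟨_, rfl, hclass c i,
      (chi_induce_compl_eq_iff hG (hclass c i)).2 (colorable_induce_compl_class c i)⟩)
  · intro h
    obtain ⟨c⟩ := (chi_eq_succ_iff.1 hG).1
    refine le_csInf ⟨_, _, rfl, hclass c 0,
      (chi_induce_compl_eq_iff hG (hclass c 0)).2 (colorable_induce_compl_class c 0)⟩ ?_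
    rintro _ ⟨S, rfl, hS, hchi⟩
    obtain ⟨c', rfl⟩ := exists_coloring_class_eq hS ((chi_induce_compl_eq_iff hG hS).1 hchi)
    exact h c' _

theorem ivsChi_le_card (hG : chi G = n + 1) {S : Finset V}
    (hS : ∀ x ∈ S, ∀ y ∈ S, ¬ G.Adj x y) (h : (G.induce (↑(Sᶜ) : Set V)).Colorable n) :
    ivsChi G ≤ #S := by
  obtain ⟨c, rfl⟩ := exists_coloring_class_eq hS h
  exact (le_ivsChi_iff hG).1 le_rfl c _

/-- `G` is `n`-colorable, and every `n`-coloring of `G` has all its color classes of size `k`. -/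
structure IsUniformlyColorable (G : SimpleGraph V) (n k : ℕ) : Prop where
  colorable : G.Colorable n
  card_class : ∀ (c : G.Coloring (Fin n)) (i : Fin n), #{v | c v = i} = k

theorem isUniformlyColorable_iff (hk : k ≠ 0) (hV : Fintype.card V = (n + 1) * k) :
    IsUniformlyColorable G (n + 1) k ↔ chi G = n + 1 ∧ ivsChi G = k := by
  constructor
  · rintro ⟨⟨c⟩, hcard⟩
    have hchi : chi G = n + 1 := chi_eq_succ_iff.2 ⟨⟨c⟩, fun ⟨c'⟩ => hk <| by
      rw [← hcard (recolorOfEmbedding G Fin.castSuccEmb c') (Fin.last n), Finset.card_eq_zero]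
      simp [(Fin.castSucc_lt_last _).ne]⟩
    have hle := (le_ivsChi_iff hchi).1 le_rfl c 0
    exact ⟨hchi, le_antisymm (hle.trans_eq (hcard c 0))
      ((le_ivsChi_iff hchi).2 fun c' i => (hcard c' i).ge)⟩
  · rintro ⟨hchi, hivs⟩
    refine ⟨(chi_eq_succ_iff.1 hchi).1, fun c i => ?_⟩
    have hle := (le_ivsChi_iff hchi).1 hivs.ge c
    have hsum : ∑ j, #{v | c v = j} = ∑ _j : Fin (n + 1), k := by
      rw [← card_eq_sum_card_fiberwise fun _ _ => mem_coe.2 (mem_univ _), card_univ, hV]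
      simp
    exact (((sum_eq_sum_iff_of_le fun j _ => hle j).1 hsum.symm) i (mem_univ i)).symm

theorem not_colorable_one_of_three_le_ivsChi (hG : chi G = 3) (hivs : 3 ≤ ivsChi G) (u v : V) :
    ¬ (G.induce (↑(({u, v} : Finset V)ᶜ) : Set V)).Colorable 1 := by
  intro h
  have hrest : ∀ {a b}, G.Adj a b → a ≠ u → a ≠ v → b ≠ u → b ≠ v → False := by
    intro a b hab hau hav hbu hbv
    obtain ⟨c⟩ := h
    exact c.valid (v := ⟨a, by simp [hau, hav]⟩) (w := ⟨b, by simp [hbu, hbv]⟩) hab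
      (Subsingleton.elim _ _)
  let c : G.Coloring (Fin 3) := Coloring.mk (fun a => if a = u then 0 else if a = v then 1 else 2)
    fun {a b} hab => by
      have := hrest hab
      have := hab.ne
      split_ifs <;> simp_all
  have hclass : ({a | c a = 0} : Finset V) = {u} := by
    ext a
    simp only [mem_filter_univ, mem_singleton]
    change (if a = u then (0 : Fin 3) else if a = v then 1 else 2) = 0 ↔ a = u
    split_ifs <;> simp_all
  have := (le_ivsChi_iff hG).1 hivs c 0
  simp [hclass] at this

theorem vsChi_eq_two_iff (hG : chi G = 3) (hivs : 3 ≤ ivsChi G) :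
    vsChi G = 2 ↔
      ∃ u v, G.Adj u v ∧ (G.induce (↑(({u, v} : Finset V)ᶜ) : Set V)).Colorable 2 := by
  rw [vsChi, hG]
  constructor
  · intro h
    obtain ⟨S, hS, hchi⟩ := h ▸ Nat.sInf_mem (Nat.nonempty_of_sInf_eq_succ h)
    obtain ⟨u, v, -, rfl⟩ := card_eq_two.1 hS
    have hcol := chi_le_iff_colorable.1 hchi.le
    refine ⟨u, v, not_not.1 fun huv => ?_, hcol⟩
    have := ivsChi_le_card hG (by simp [huv, G.adj_comm v u]) hcol
    omega
  · rintro ⟨u, v, huv, hcol⟩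
    have hchi : chi (G.induce (↑(({u, v} : Finset V)ᶜ) : Set V)) = 2 := by
      exact chi_eq_succ_iff.2 ⟨hcol, not_colorable_one_of_three_le_ivsChi hG hivs u v⟩
    refine le_antisymm (Nat.sInf_le ⟨_, card_pair huv.ne, hchi⟩) (le_csInf ⟨_, _, rfl, hchi⟩ ?_)
    rintro _ ⟨S, rfl, hS⟩
    by_contra! hcard
    have hindep : ∀ x ∈ S, ∀ y ∈ S, ¬ G.Adj x y := fun x hx y hy =>
      card_le_one.1 (Nat.le_of_lt_succ hcard) x hx y hy ▸ G.loopless.irrefl x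
    have := ivsChi_le_card hG hindep (chi_le_iff_colorable.1 hS.le)
    omega

end Stability

section MaxDegree

variable {V W : Type*} [Fintype V] [Fintype W]

theorem maxDeg_eq_sup (G : SimpleGraph V) [DecidableRel G.Adj] :
    maxDeg G = univ.sup fun v => #{w | G.Adj v w} := by
  have hmax : maxDeg G = G.maxDegree := by unfold maxDeg; congr!
  simp only [← neighborFinset_eq_filter, card_neighborFinset_eq_degree, hmax]
  refine le_antisymm (G.maxDegree_le_of_forall_degree_le _ fun v => ?_) ?_
  · exact le_sup (f := fun v => G.degree v) (mem_univ v)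
  · exact Finset.sup_le fun v _ => G.degree_le_maxDegree v

theorem card_le_maxDeg {G : SimpleGraph V} {v : V} {s : Finset V} (h : ∀ w ∈ s, G.Adj v w) :
    #s ≤ maxDeg G := by
  classical
  rw [maxDeg_eq_sup]
  exact (card_le_card fun w hw => by simpa using h w hw).trans
    (le_sup (f := fun v => #{w | G.Adj v w}) (mem_univ v))

theorem maxDeg_congr {G : SimpleGraph V} {H : SimpleGraph W} (e : G ≃g H) :
    maxDeg G = maxDeg H := by
  classical
  have hdeg : ∀ v, #{w | G.Adj v w} = #{w | H.Adj (e v) w} := fun v =>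
    card_equiv e.toEquiv fun w => by simp [e.map_adj_iff]
  simp only [maxDeg_eq_sup, sup_univ_eq_ciSup, hdeg]
  exact e.toEquiv.iSup_congr fun _ => rfl

end MaxDegree

section TriangleStructure

variable {V : Type*} {G : SimpleGraph V}

/-- `Q` is one side of a bipartition of the graph obtained from `G` by deleting `S`; which vertices
of `S` belong to `Q` is irrelevant. -/
def IsBipartiteOff (G : SimpleGraph V) (S Q : Finset V) : Prop :=
  ∀ ⦃a b⦄, a ∉ S → b ∉ S → G.Adj a b → (a ∈ Q ↔ b ∉ Q)

/-- The vertices outside `Q` induce the triangle `t 0, t 1, t 2` together with isolated vertices,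
and `Q` is independent. -/
structure IsTriangleOver (G : SimpleGraph V) (t : Fin 3 → V) (Q : Finset V) : Prop where
  adj : ∀ i j, i ≠ j → G.Adj (t i) (t j)
  notMem : ∀ i, t i ∉ Q
  indep : ∀ a ∈ Q, ∀ b ∈ Q, ¬ G.Adj a b
  mem_range : ∀ a b, a ∉ Q → b ∉ Q → G.Adj a b → a ∈ Set.range t

theorem IsBipartiteOff.compl [Fintype V] [DecidableEq V] {S Q : Finset V}
    (h : IsBipartiteOff G S Q) : IsBipartiteOff G S Qᶜ := fun a b ha hb hab => by
  simpa [not_iff_not] using (not_congr (h ha hb hab)).trans not_not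

theorem colorable_two_induce_compl_iff [Fintype V] [DecidableEq V] {S : Finset V} :
    (G.induce (↑(Sᶜ) : Set V)).Colorable 2 ↔ ∃ Q, IsBipartiteOff G S Q := by
  classical
  constructor
  · rintro ⟨c⟩
    refine ⟨univ.filter fun a => ∃ ha : a ∈ (↑(Sᶜ) : Set V), c ⟨a, ha⟩ = 0, fun a b ha hb hab => ?_⟩
    have ha' : a ∈ (↑(Sᶜ) : Set V) := by simpa using ha
    have hb' : b ∈ (↑(Sᶜ) : Set V) := by simpa using hb
    have hne : c ⟨a, ha'⟩ ≠ c ⟨b, hb'⟩ := c.valid hab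
    simp only [mem_filter_univ, ha', hb', exists_true_left]
    omega
  · rintro ⟨Q, hQ⟩
    refine ⟨Coloring.mk (fun a => if a.1 ∈ Q then 0 else 1) fun {a b} hab => ?_⟩
    have := hQ (by simpa using a.2) (by simpa using b.2) hab
    split_ifs <;> simp_all

variable [DecidableEq V]

theorem IsBipartiteOff.exchange {u v x : V} {Q : Finset V} (h : IsBipartiteOff G {u, v} Q)
    (hu : ∀ w ∈ Q, G.Adj u w → w = v ∨ w = x) : IsBipartiteOff G {x, v} (insert u Q) := by
  intro a b ha hb hab
  simp only [mem_insert, mem_singleton, not_or] at ha hb ⊢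
  by_cases hau : a = u
  · subst hau
    have := hu b
    have := hab.ne
    tauto
  · by_cases hbu : b = u
    · subst hbu
      have := hu a
      have := hab.symm
      tauto
    · have := h (a := a) (b := b) (by simp [hau, ha]) (by simp [hbu, hb]) hab
      tauto

theorem IsBipartiteOff.exists_adj_ne {u v : V} {Q : Finset V} (h : IsBipartiteOff G {u, v} Q)
    (hcrit : ∀ R, ¬ IsBipartiteOff G {v, v} R) : ∃ w ∈ Q, G.Adj u w ∧ w ≠ v := by
  by_contra! hnone
  exact hcrit _ (h.exchange fun w hw huw => .inl (hnone w hw huw))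

section Degree

variable [Fintype V]

theorem exists_unique_neighbor_side {u v : V} {Q : Finset V}
    (hcrit : ∀ x y R, IsBipartiteOff G {x, y} R → G.Adj x y) (hdeg : maxDeg G ≤ 4)
    (huv : G.Adj u v) (h : IsBipartiteOff G {u, v} Q) :
    ∃ R x, (R = Q ∨ R = Qᶜ) ∧ x ∈ R ∧ G.Adj u x ∧ G.Adj x v ∧
      ∀ w ∈ R, G.Adj u w → w = v ∨ w = x := by
  classical
  let N (R : Finset V) : Finset V := {w ∈ R | G.Adj u w ∧ w ≠ v}
  have hne : ∀ R, IsBipartiteOff G {u, v} R → 0 < #(N R) := fun R hR => by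
    obtain ⟨w, hw, huw⟩ := hR.exists_adj_ne fun R' h' => G.loopless.irrefl v (hcrit v v R' h')
    exact card_pos.2 ⟨w, mem_filter.2 ⟨hw, huw⟩⟩
  have hcard : #(N Q) + #(N Qᶜ) + 1 ≤ 4 := by
    have hdisj : Disjoint (N Q) (N Qᶜ) := disjoint_filter_filter disjoint_compl_right
    have hv : v ∉ N Q ∪ N Qᶜ := by simp [N]
    rw [← card_union_of_disjoint hdisj, ← card_insert_of_notMem hv]
    refine (card_le_maxDeg (v := u) fun w hw => ?_).trans hdeg
    rcases mem_insert.1 hw with rfl | hw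
    · exact huv
    · rcases mem_union.1 hw with hw | hw <;> exact (mem_filter.1 hw).2.1
  have hpos := hne Q h
  have hpos' := hne Qᶜ h.compl
  obtain ⟨R, hR, hRcard⟩ : ∃ R, (R = Q ∨ R = Qᶜ) ∧ #(N R) = 1 := by
    by_cases hQ : #(N Q) = 1
    · exact ⟨Q, .inl rfl, hQ⟩
    · exact ⟨Qᶜ, .inr rfl, by omega⟩
  obtain ⟨x, hx⟩ := card_eq_one.1 hRcard
  have hxN : x ∈ N R := hx ▸ mem_singleton_self x
  have honly : ∀ w ∈ R, G.Adj u w → w = v ∨ w = x := fun w hw huw =>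
    or_iff_not_imp_left.2 fun hwv => mem_singleton.1 (hx ▸ mem_filter.2 ⟨hw, huw, hwv⟩)
  have hbip : IsBipartiteOff G {u, v} R := by
    rcases hR with rfl | rfl
    exacts [h, h.compl]
  exact ⟨R, x, hR, (mem_filter.1 hxN).1, (mem_filter.1 hxN).2.1, hcrit x v _ (hbip.exchange honly),
    honly⟩

theorem IsBipartiteOff.isTriangleOver {u v x : V} {R : Finset V} (h : IsBipartiteOff G {u, v} R)
    (hx : x ∈ R) (huv : G.Adj u v) (hux : G.Adj u x) (hxv : G.Adj x v)
    (hu : ∀ w ∈ R, G.Adj u w → w = v ∨ w = x) (hv : ∀ w ∈ R, G.Adj v w → w = u ∨ w = x) :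
    IsTriangleOver G ![u, v, x] (Rᶜ \ {u, v}) where
  adj := by simp [Fin.forall_fin_succ, huv, hux, hxv, huv.symm, hux.symm, hxv.symm]
  notMem := by simp [Fin.forall_fin_succ, hx]
  indep a ha b hb hab := by
    simp only [mem_sdiff, mem_compl] at ha hb
    have := h ha.2 hb.2 hab
    tauto
  mem_range a b ha hb hab := by
    have hmem : ∀ c, c ∉ Rᶜ \ {u, v} → c = u ∨ c = v ∨ c ∈ R := by simp; tauto
    by_contra hrange
    obtain ⟨hau, hav, hax⟩ : a ≠ u ∧ a ≠ v ∧ a ≠ x :=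
      ⟨fun e => hrange ⟨0, e.symm⟩, fun e => hrange ⟨1, e.symm⟩, fun e => hrange ⟨2, e.symm⟩⟩
    have haR : a ∈ R := ((hmem a ha).resolve_left hau).resolve_left hav
    by_cases hbu : b = u
    · have := hu a haR (hbu ▸ hab.symm)
      tauto
    by_cases hbv : b = v
    · have := hv a haR (hbv ▸ hab.symm)
      tauto
    have hbR : b ∈ R := ((hmem b hb).resolve_left hbu).resolve_left hbv
    exact (h (by simp [hau, hav]) (by simp [hbu, hbv]) hab).1 haR hbR

theorem exists_isTriangleOver {u v : V} {Q : Finset V} (hfree : G.CliqueFree 4)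
    (hcrit : ∀ x y R, IsBipartiteOff G {x, y} R → G.Adj x y) (hdeg : maxDeg G ≤ 4)
    (h : IsBipartiteOff G {u, v} Q) : ∃ t R, IsTriangleOver G t R := by
  have huv := hcrit u v Q h
  obtain ⟨R, x, hR, hxR, hux, hxv, hu⟩ := exists_unique_neighbor_side hcrit hdeg huv h
  have hbip : IsBipartiteOff G {u, v} R := by
    rcases hR with rfl | rfl
    exacts [h, h.compl]
  obtain ⟨R', y, hR', hyR', hvy, hyu, hv⟩ :=
    exists_unique_neighbor_side hcrit hdeg huv.symm (pair_comm u v ▸ hbip)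
  rcases hR' with rfl | rfl
  · obtain rfl : y = x := (hu y hyR' hyu.symm).resolve_left hvy.ne'
    exact ⟨_, _, hbip.isTriangleOver hxR huv hux hxv hu hv⟩
  · -- After exchanging `u` for `x`, the only neighbor of `v` on the other side is `y`.
    have hexch : IsBipartiteOff G {v, x} (insert u R)ᶜ :=
      (pair_comm x v ▸ hbip.exchange hu).compl
    have hyx : G.Adj y x := hcrit y x _ <| hexch.exchange fun w hw hvw => by
      simp only [mem_compl, mem_insert, not_or] at hw
      exact .inr ((hv w (mem_compl.2 hw.2) hvw).resolve_left hw.1)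
    refine absurd ((is3Clique_triple_iff.2 ⟨hux, huv, hxv⟩).insert (a := y) ?_) (hfree _)
    simp [hyu, hyx, hvy.symm]

end Degree

end TriangleStructure

section TriangleOver

variable {ρ κ : Type*}

/-- The graph with a triangle `inl i`, further vertices `inr (inl p)` and an independent set of
vertices `inr (inr x)`: the triangle vertex `inl i` is joined to the members of `A i`, the vertex
`inr (inl p)` to the members of `B p`. -/
def triangleOver (A : Fin 3 → Finset κ) (B : ρ → Finset κ) : SimpleGraph (Fin 3 ⊕ ρ ⊕ κ) where
  Adj
    | .inl i, .inl j => i ≠ j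
    | .inl i, .inr (.inr x) => x ∈ A i
    | .inr (.inr x), .inl i => x ∈ A i
    | .inr (.inl p), .inr (.inr x) => x ∈ B p
    | .inr (.inr x), .inr (.inl p) => x ∈ B p
    | _, _ => False
  symm := ⟨by rintro (i | p | x) (j | q | y) h <;> first | exact h | exact h.symm⟩
  loopless := ⟨by rintro (_ | _ | _) <;> simp⟩

instance [DecidableEq κ] (A : Fin 3 → Finset κ) (B : ρ → Finset κ) :
    DecidableRel (triangleOver A B).Adj := by
  rintro (i | p | x) (j | q | y) <;> unfold triangleOver <;> infer_instance

/-- `c i` is a color for a vertex joined to all of `N i`, when the vertices `j` are colored by `x`: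
no vertex in `N i` receives the color `c i`. -/
def IsProperOn {ι : Type*} (N : ι → Finset κ) (c : ι → Fin 3) (x : κ → Fin 3) : Prop :=
  ∀ i, ∀ j ∈ N i, x j ≠ c i

instance {ι : Type*} [Fintype ι] (N : ι → Finset κ) (c : ι → Fin 3) (x : κ → Fin 3) :
    Decidable (IsProperOn N c x) := by unfold IsProperOn; infer_instance

variable {A : Fin 3 → Finset κ} {B : ρ → Finset κ}

/-- The coloring of `triangleOver A B` giving the color `i` to the triangle vertex `inl i`. -/
def triangleOverColoring {x : κ → Fin 3} {y : ρ → Fin 3} (hx : IsProperOn A id x)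
    (hy : IsProperOn B y x) : (triangleOver A B).Coloring (Fin 3) :=
  Coloring.mk (Sum.elim id (Sum.elim y x)) <| by
    rintro (i | p | a) (j | q | b) h
    exacts [h, h.elim, (hx i b h).symm, h.elim, h.elim, (hy p b h).symm, hx j a h, hy q a h, h.elim]

theorem isProperOn_of_coloring (c : (triangleOver A B).Coloring (Fin 3))
    (hc : ∀ i, c (.inl i) = i) :
    IsProperOn A id (fun a => c (.inr (.inr a))) ∧
      IsProperOn B (fun p => c (.inr (.inl p))) (fun a => c (.inr (.inr a))) := by
  refine ⟨fun i a ha => ?_, fun p a ha => ?_⟩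
  · have := c.valid (v := .inr (.inr a)) (w := .inl i) ha
    rwa [hc] at this
  · exact c.valid (v := .inr (.inr a)) (w := .inr (.inl p)) ha

theorem exists_perm_of_coloring (c : (triangleOver A B).Coloring (Fin 3)) :
    ∃ σ : Equiv.Perm (Fin 3), ∀ i, σ (c (.inl i)) = i := by
  have hinj : Function.Injective fun i => c (.inl i) := fun i j hij =>
    not_not.1 fun hne => c.valid (v := .inl i) (w := .inl j) hne hij
  let τ := Equiv.ofBijective _ (Finite.injective_iff_bijective.1 hinj)
  exact ⟨τ.symm, fun i => τ.symm_apply_apply i⟩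

variable [Fintype ρ] [Fintype κ]

/-- The condition on the neighborhoods `A` and `B` for every `3`-coloring of `triangleOver A B` to
have color classes of size `k + 1`. The colors of the three triangle vertices are left out. -/
def IsRigid (A : Fin 3 → Finset κ) (B : ρ → Finset κ) (k : ℕ) : Prop :=
  (∃ x, IsProperOn A id x ∧ ∃ y, IsProperOn B y x) ∧
    ∀ x, IsProperOn A id x → ∀ y, IsProperOn B y x → ∀ i, #{a | x a = i} + #{p | y p = i} = k

instance [DecidableEq ρ] [DecidableEq κ] (k : ℕ) : Decidable (IsRigid A B k) := by
  unfold IsRigid; infer_instance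

theorem card_filter_sum_eq (c : Fin 3 ⊕ ρ ⊕ κ → Fin 3) (hc : ∀ i, c (.inl i) = i) (i : Fin 3) :
    #{v | c v = i} = #{a | c (.inr (.inr a)) = i} + #{p | c (.inr (.inl p)) = i} + 1 := by
  simp only [card_filter, Fintype.sum_sum_type, hc, sum_ite_eq', mem_univ, if_true]
  omega

theorem isUniformlyColorable_triangleOver_iff {k : ℕ} :
    IsUniformlyColorable (triangleOver A B) 3 (k + 1) ↔ IsRigid A B k := by
  constructor
  · rintro ⟨⟨c⟩, hcard⟩
    obtain ⟨σ, hσ⟩ := exists_perm_of_coloring c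
    obtain ⟨hx, hy⟩ := isProperOn_of_coloring (recolorOfEquiv _ σ c) hσ
    refine ⟨⟨_, hx, _, hy⟩, fun x hx y hy i => Nat.succ_injective ?_⟩
    exact (card_filter_sum_eq (triangleOverColoring hx hy) (fun _ => rfl) i).symm.trans (hcard _ i)
  · rintro ⟨⟨x, hx, y, hy⟩, hcard⟩
    refine ⟨⟨triangleOverColoring hx hy⟩, fun c i => ?_⟩
    obtain ⟨σ, hσ⟩ := exists_perm_of_coloring c
    obtain ⟨hx, hy⟩ := isProperOn_of_coloring (recolorOfEquiv _ σ c) hσ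
    calc #{v | c v = i} = #{v | (σ ∘ c) v = σ i} := by simp
      _ = _ := card_filter_sum_eq (σ ∘ c) hσ (σ i)
      _ = k + 1 := congrArg (· + 1) (hcard _ hx _ hy (σ i))

end TriangleOver

section Rigidity

variable {ρ κ : Type*} [Fintype ρ] [Fintype κ] {A : Fin 3 → Finset κ} {B : ρ → Finset κ} {k : ℕ}

theorem IsRigid.not_exists_mem_all (h : IsRigid A B k) : ¬ ∃ a, ∀ i, a ∈ A i := by
  rintro ⟨a, ha⟩
  obtain ⟨x, hx, -⟩ := h.1
  exact hx (x a) a (ha _) rfl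

variable [DecidableEq κ]

theorem IsRigid.card_of_disjoint (h : IsRigid A B k) {i j : Fin 3} (hij : i ≠ j)
    (hdisj : Disjoint (A i) (A j)) : #(A j) = k ∧ #(A j)ᶜ = k := by
  obtain ⟨l, hli, hlj⟩ : ∃ l, l ≠ i ∧ l ≠ j := by clear hij hdisj; revert i j; decide
  let x (a : κ) : Fin 3 := if a ∈ A j then i else j
  have hxl : ∀ a, x a ≠ l := fun a => by unfold x; split_ifs; exacts [hli.symm, hlj.symm]
  have hx : IsProperOn A id x := fun m a ha hxm => by
    by_cases haj : a ∈ A j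
    · obtain rfl : i = m := by simpa [x, haj] using hxm
      exact disjoint_left.1 hdisj ha haj
    · obtain rfl : j = m := by simpa [x, haj] using hxm
      exact haj ha
  have hcard := h.2 x hx (fun _ => l) fun _ a _ => hxl a
  exact ⟨by simpa [x, hli, hij.symm] using hcard i,
    by simpa [x, hlj, hij, compl_eq_univ_sdiff, ← filter_notMem_eq_sdiff] using hcard j⟩

theorem IsRigid.card_compl_of_unused (h : IsRigid A B k) {x : κ → Fin 3} {y : ρ → Fin 3}
    (hx : IsProperOn A id x) (hy : IsProperOn B y x) {i : Fin 3} (hi : ∀ p, y p ≠ i) :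
    #(A i)ᶜ = k := by
  let x' (a : κ) : Fin 3 := if a ∈ A i then x a else i
  have hx' : IsProperOn A id x' := fun j a ha => by
    by_cases hai : a ∈ A i
    · simpa [x', hai] using hx j a ha
    · have hne : i ≠ j := by rintro rfl; exact hai ha
      simpa [x', hai] using hne
  have hy' : IsProperOn B y x' := fun p a ha => by
    by_cases hai : a ∈ A i
    · simpa [x', hai] using hy p a ha
    · simpa [x', hai] using (hi p).symm
  have hclass : ({a | x' a = i} : Finset κ) = (A i)ᶜ := by
    ext a
    by_cases hai : a ∈ A i
    · simpa [x', hai] using hx i a hai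
    · simp [x', hai]
  simpa [hclass, hi] using h.2 x' hx' y hy' i

end Rigidity

section Isomorphism

variable {V W : Type*} {G : SimpleGraph V} {H : SimpleGraph W}

theorem IsUniformlyColorable.of_iso [Fintype V] [Fintype W] {n k : ℕ} (e : G ≃g H)
    (h : IsUniformlyColorable G n k) : IsUniformlyColorable H n k where
  colorable := h.colorable.of_hom e.symm.toHom
  card_class c i := by
    rw [← h.card_class (c.comp e.toHom) i]
    exact (card_equiv e.toEquiv fun v => by simp).symm

theorem IsUniformlyColorable.card_eq [Fintype V] [DecidableEq V] {n k : ℕ}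
    (h : IsUniformlyColorable G (n + 1) k) {S : Finset V} (hS : ∀ x ∈ S, ∀ y ∈ S, ¬ G.Adj x y)
    (hcol : (G.induce (↑(Sᶜ) : Set V)).Colorable n) : #S = k := by
  obtain ⟨c, rfl⟩ := exists_coloring_class_eq hS hcol
  exact h.card_class c _

theorem IsUniformlyColorable.adj_of_isBipartiteOff [Fintype V] [DecidableEq V] {k : ℕ}
    (h : IsUniformlyColorable G 3 k) (hk : 2 < k) {u v : V} {Q : Finset V}
    (hQ : IsBipartiteOff G {u, v} Q) : G.Adj u v := by
  by_contra huv
  have hcard := h.card_eq (S := {u, v}) (by simp [huv, G.adj_comm v u])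
    (colorable_two_induce_compl_iff.2 ⟨Q, hQ⟩)
  exact (card_le_two.trans_lt hk).ne hcard

theorem chi_ivsChi_vsChi_eq_iff [Fintype V] [DecidableEq V] {k : ℕ} (hk : 2 < k)
    (hV : Fintype.card V = 3 * k) : chi G = 3 ∧ ivsChi G = k ∧ vsChi G = 2 ↔
      IsUniformlyColorable G 3 k ∧ ∃ u v Q, IsBipartiteOff G {u, v} Q := by
  rw [← and_assoc, ← isUniformlyColorable_iff (by omega) hV]
  refine and_congr_right fun h => ?_
  obtain ⟨hchi, hivs⟩ := (isUniformlyColorable_iff (by omega) hV).1 h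
  simp only [vsChi_eq_two_iff hchi (hk.trans_eq hivs.symm), colorable_two_induce_compl_iff]
  exact exists₂_congr fun u v => and_iff_right_of_imp fun ⟨Q, hQ⟩ => h.adj_of_isBipartiteOff hk hQ

theorem IsBipartiteOff.map (e : G ≃g H) {S Q : Finset V} (h : IsBipartiteOff G S Q) :
    IsBipartiteOff H (S.map e.toEquiv.toEmbedding) (Q.map e.toEquiv.toEmbedding) := by
  intro a b ha hb hab
  simp only [mem_map_equiv] at ha hb ⊢
  exact h ha hb (e.symm.map_adj_iff.2 hab)

variable {ρ ρ₁ κ κ₁ : Type*} {A : Fin 3 → Finset κ} {B : ρ → Finset κ}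
  {A₁ : Fin 3 → Finset κ₁} {B₁ : ρ₁ → Finset κ₁}

/-- Relabelling the vertices of `triangleOver A B` within its three parts. -/
def triangleOverIso (σ : Equiv.Perm (Fin 3)) (e : ρ ≃ ρ₁) (f : κ ≃ κ₁)
    (hA : ∀ i x, f x ∈ A₁ (σ i) ↔ x ∈ A i) (hB : ∀ p x, f x ∈ B₁ (e p) ↔ x ∈ B p) :
    triangleOver A B ≃g triangleOver A₁ B₁ where
  toEquiv := Equiv.sumCongr σ (e.sumCongr f)
  map_rel_iff' := by
    rintro (i | p | x) (j | q | y)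
    exacts [not_congr σ.injective.eq_iff, .rfl, hA i y, .rfl, .rfl, hB p y, hA j x, hB q x, .rfl]

theorem IsTriangleOver.injective {t : Fin 3 → V} {Q : Finset V} (h : IsTriangleOver G t Q) :
    Function.Injective t := fun i j hij => not_not.1 fun hne => (h.adj i j hne).ne hij

theorem IsTriangleOver.exists_iso_triangleOver [Finite V] {t : Fin 3 → V} {Q : Finset V}
    (h : IsTriangleOver G t Q) : ∃ (m n : ℕ) (A : Fin 3 → Finset (Fin n))
      (B : Fin m → Finset (Fin n)), Nonempty (G ≃g triangleOver A B) := by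
  classical
  cases nonempty_fintype V
  let eP := Fintype.equivFin {v // v ∉ Q ∧ v ∉ Set.range t}
  let eQ := Fintype.equivFin {v // v ∈ Q}
  let g : Fin 3 ⊕ Fin _ ⊕ Fin _ → V :=
    Sum.elim t (Sum.elim (fun p => eP.symm p) fun x => eQ.symm x)
  have hg : Function.Bijective g := by
    refine ⟨h.injective.sumElim ((Subtype.val_injective.comp eP.symm.injective).sumElim
      (Subtype.val_injective.comp eQ.symm.injective) fun p x hpx => ?_) ?_, fun v => ?_⟩
    · exact (eP.symm p).2.1 ((show (eP.symm p : V) = _ from hpx) ▸ (eQ.symm x).2)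
    · rintro i (p | x) hi
      exacts [(eP.symm p).2.2 ⟨i, hi⟩, h.notMem i (hi ▸ (eQ.symm x).2)]
    · by_cases hQ : v ∈ Q
      · exact ⟨.inr (.inr (eQ ⟨v, hQ⟩)), by simp [g]⟩
      by_cases htv : v ∈ Set.range t
      · exact htv.imp' .inl fun _ => id
      · exact ⟨.inr (.inl (eP ⟨v, hQ, htv⟩)), by simp [g]⟩
  have hP : ∀ p b, b ∉ Q → ¬ G.Adj (eP.symm p) b := fun p b hb hpb =>
    (eP.symm p).2.2 (h.mem_range _ b (eP.symm p).2.1 hb hpb)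
  have hN : ∀ v x, G.Adj v (eQ.symm x) ↔ x ∈ ({y | G.Adj v (eQ.symm y)} : Finset _) := by simp
  refine ⟨_, _, fun i => {x | G.Adj (t i) (eQ.symm x)},
    fun p => {x | G.Adj (eP.symm p) (eQ.symm x)}, ⟨RelIso.symm ⟨.ofBijective g hg, ?_⟩⟩⟩
  rintro (i | p | x) (j | q | y)
  · exact ⟨fun hij => ne_of_apply_ne t hij.ne, h.adj i j⟩
  · exact iff_of_false (fun hiq => hP q _ (h.notMem i) hiq.symm) id
  · exact hN (t i) y
  · exact iff_of_false (hP p _ (h.notMem j)) id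
  · exact iff_of_false (hP p _ (eP.symm q).2.1) id
  · exact hN (eP.symm p) y
  · exact (G.adj_comm _ _).trans (hN (t j) x)
  · exact (G.adj_comm _ _).trans (hN (eP.symm q) x)
  · exact iff_of_false (h.indep _ (eQ.symm x).2 _ (eQ.symm y).2) id

theorem card_add_two_le_maxDeg [Fintype ρ] [Fintype κ] (A : Fin 3 → Finset κ) (B : ρ → Finset κ)
    (i : Fin 3) : #(A i) + 2 ≤ maxDeg (triangleOver A B) := by
  have hcard : #(({i}ᶜ : Finset (Fin 3)).disjSum ((∅ : Finset ρ).disjSum (A i))) = 2 + #(A i) := by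
    simp [card_disjSum, card_compl]
  rw [add_comm, ← hcard]
  refine card_le_maxDeg (v := .inl i) ?_
  rintro (j | p | x) hw
  · exact Ne.symm (by simpa using hw)
  · simp at hw
  · change x ∈ A i
    simpa using hw

theorem exists_isBipartiteOff_triangleOver [Finite κ] [DecidableEq ρ] [DecidableEq κ]
    (A : Fin 3 → Finset κ) (B : ρ → Finset κ) :
    ∃ Q, IsBipartiteOff (triangleOver A B) {.inl 0, .inl 1} Q := by
  cases nonempty_fintype κ
  refine ⟨(∅ : Finset (Fin 3)).disjSum ((∅ : Finset ρ).disjSum univ), ?_⟩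
  rintro (i | p | x) (j | q | y) ha hb h
  · have hij : i ≠ j := h
    simp only [mem_insert, mem_singleton, Sum.inl.injEq] at ha hb
    omega
  all_goals first | exact h.elim | simp

end Isomorphism

section Sizes

variable {ρ κ : Type*} [Fintype κ] {A : Fin 3 → Finset κ} {B : ρ → Finset κ} {k : ℕ}

theorem three_le_card_of_pairwise_not_disjoint (hmeet : ∀ i j, i ≠ j → ¬ Disjoint (A i) (A j))
    (hno : ¬ ∃ a, ∀ i, a ∈ A i) : 3 ≤ Fintype.card κ := by
  have hpair : ∀ i : Fin 3, ∃ a, ∀ j, j ≠ i → a ∈ A j := fun i => by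
    obtain ⟨a, ha, ha'⟩ := not_disjoint_iff.1 (hmeet (i + 1) (i + 2) (by simp))
    refine ⟨a, fun j hj => ?_⟩
    obtain rfl | rfl : j = i + 1 ∨ j = i + 2 := by omega
    exacts [ha, ha']
  choose w hw using hpair
  have hinj : Function.Injective w := fun i j hij => by
    by_contra hne
    exact hno ⟨w i, fun l => (eq_or_ne l i).elim (fun hl => hij ▸ hw j l (hl ▸ hne)) (hw i l)⟩
  simpa using Fintype.card_le_of_injective w hinj

theorem IsProperOn.eq_id {x : Fin 3 → Fin 3} (hx : IsProperOn (fun i => {i}ᶜ) id x) : x = id := by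
  funext a
  by_contra hne
  exact hx (x a) a (by simpa using Ne.symm hne) rfl

variable [Fintype ρ]

theorem IsRigid.exists_mem_of_ne (h : IsRigid A B k) {x : κ → Fin 3} {y : ρ → Fin 3}
    (hx : IsProperOn A id x) (hy : IsProperOn B y x) {p : ρ} {i : Fin 3} (hi : i ≠ y p) :
    ∃ a ∈ B p, x a = i := by
  classical
  by_contra! hfree
  -- Otherwise `p` could be recolored by `i`, which would enlarge the class of `i`.
  have hy' : IsProperOn B (Function.update y p i) x := fun q a ha => by
    obtain rfl | hq := eq_or_ne q p
    · simpa using hfree a ha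
    · simpa [hq] using hy q a ha
  have hclass : ({q | Function.update y p i q = i} : Finset ρ) =
      insert p ({q | y q = i} : Finset ρ) := by
    ext q
    obtain rfl | hq := eq_or_ne q p <;> simp [*]
  have hcard := (h.2 x hx _ hy' i).trans (h.2 x hx y hy i).symm
  rw [hclass, card_insert_of_notMem (by simpa using hi.symm)] at hcard
  omega

theorem IsRigid.two_le_card (h : IsRigid A B k) (p : ρ) : 2 ≤ #(B p) := by
  obtain ⟨x, hx, y, hy⟩ := h.1
  obtain ⟨a, ha, hxa⟩ := h.exists_mem_of_ne hx hy (p := p) (i := y p + 1) (by simp)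
  obtain ⟨b, hb, hxb⟩ := h.exists_mem_of_ne hx hy (p := p) (i := y p + 2) (by simp)
  exact one_lt_card.2 ⟨a, ha, b, hb, ne_of_apply_ne x (by simp [hxa, hxb])⟩

theorem IsRigid.exists_equiv_of_compl_singleton {B : ρ → Finset (Fin 3)}
    (h : IsRigid (fun i => {i}ᶜ) B 2) : ∃ e : ρ ≃ Fin 3, ∀ p, B p = {e p}ᶜ := by
  obtain ⟨x, hx, y, hy⟩ := h.1
  obtain rfl := hx.eq_id
  have hbij : Function.Bijective y := (Function.bijective_iff_existsUnique y).2 fun i => by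
    have hone : #{p | y p = i} = 1 := by
      have := h.2 id hx y hy i
      simp only [id_eq, filter_eq', mem_univ, if_true, card_singleton] at this
      omega
    obtain ⟨p, hp⟩ := card_eq_one.1 hone
    simp only [Finset.ext_iff, mem_filter_univ, mem_singleton] at hp
    exact ⟨p, (hp p).2 rfl, fun q hq => (hp q).1 hq⟩
  refine ⟨.ofBijective y hbij, fun p => ?_⟩
  ext a
  simp only [Equiv.ofBijective_apply, mem_compl, mem_singleton]
  exact ⟨fun ha hay => hy p a ha hay, fun hay => by simpa using h.exists_mem_of_ne hx hy hay⟩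

theorem IsRigid.card_eq_two (h : IsRigid A B 2) (hle : ∀ i, #(A i) ≤ 2) (i : Fin 3) :
    #(A i) = 2 := by
  classical
  by_cases hmeet : ∀ j, j ≠ i → ¬ Disjoint (A j) (A i)
  · refine le_antisymm (hle i) (not_lt.1 fun hlt => h.not_exists_mem_all ?_)
    have hone := card_le_one.1 (Nat.le_of_lt_succ hlt)
    obtain ⟨a, -, ha⟩ := not_disjoint_iff.1 (hmeet (i + 1) (by simp))
    refine ⟨a, fun j => ?_⟩
    obtain rfl | hj := eq_or_ne j i
    · exact ha
    · obtain ⟨b, hb, hb'⟩ := not_disjoint_iff.1 (hmeet j hj)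
      exact hone b hb' a ha ▸ hb
  · push Not at hmeet
    obtain ⟨j, hj, hdisj⟩ := hmeet
    exact (h.card_of_disjoint hj hdisj).1

theorem IsRigid.card_eq_three_or_four (h : IsRigid A B 2) (hle : ∀ i, #(A i) ≤ 2)
    (hcard : Fintype.card ρ + Fintype.card κ = 6) : Fintype.card κ = 3 ∨ Fintype.card κ = 4 := by
  classical
  by_cases hmeet : ∀ i j, i ≠ j → ¬ Disjoint (A i) (A j)
  · have hthree := three_le_card_of_pairwise_not_disjoint hmeet h.not_exists_mem_all
    obtain hρ | hρ := le_or_gt 3 (Fintype.card ρ)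
    · omega
    obtain ⟨x, hx, y, hy⟩ := h.1
    obtain ⟨i, hi⟩ : ∃ i, ∀ p, y p ≠ i := by
      by_contra! hsurj
      have := Fintype.card_le_of_surjective y hsurj
      simp only [Fintype.card_fin] at this
      omega
    have := card_add_card_compl (A i)
    have := h.card_compl_of_unused hx hy hi
    have := hle i
    omega
  · push Not at hmeet
    obtain ⟨i, j, hij, hdisj⟩ := hmeet
    obtain ⟨hj, hj'⟩ := h.card_of_disjoint hij hdisj
    have := card_add_card_compl (A j)
    omega

end Sizes

section Walks

variable {V W : Type*} [Fintype V] [Fintype W]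

/-- The number of walks of length `k` starting at `v`. -/
def walkCount (G : SimpleGraph V) [DecidableRel G.Adj] : ℕ → V → ℕ
  | 0, _ => 1
  | k + 1, v => ∑ w with G.Adj v w, walkCount G k w

/-- The number of walks of length `6`, counted by their midpoints: an isomorphism invariant that
separates the graphs of the classification. -/
def sixWalkCount (G : SimpleGraph V) [DecidableRel G.Adj] : ℕ :=
  ∑ v, walkCount G 3 v ^ 2

variable {G : SimpleGraph V} {H : SimpleGraph W} [DecidableRel G.Adj] [DecidableRel H.Adj]

theorem walkCount_iso (e : G ≃g H) (k : ℕ) (v : V) : walkCount H k (e v) = walkCount G k v := by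
  induction k generalizing v with
  | zero => rfl
  | succ k ih => exact (sum_equiv e.toEquiv (by simp [e.map_adj_iff]) fun w _ => (ih w).symm).symm

theorem sixWalkCount_congr (e : G ≃g H) : sixWalkCount G = sixWalkCount H :=
  Fintype.sum_equiv e.toEquiv _ _ fun v => congrArg (· ^ 2) (walkCount_iso e 3 v).symm

end Walks

section Classification

/-- The three ways, up to symmetry, to choose three pairs from four points without a point common
to all three: a pair and twice its complement, a path, and a triangle. -/
def template : Fin 3 → Fin 3 → Finset (Fin 4) :=
  ![![{0, 1}, {2, 3}, {2, 3}], ![{0, 2}, {0, 1}, {2, 3}], ![{1, 2}, {0, 2}, {0, 1}]]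

/-- For each `template t`, the neighborhoods of the two remaining vertices in the graphs of the
classification, one choice up to symmetry. -/
def attachments : Fin 3 → List (Fin 2 → Finset (Fin 4)) :=
  ![[![{0, 2}, {1, 2}], ![{0, 2}, {0, 1, 2}], ![{0, 2}, {1, 3}], ![{0, 2}, {0, 1, 3}],
      ![{0, 2}, {1, 2, 3}], ![{0, 2}, {0, 1, 2, 3}], ![{0, 1, 2}, {0, 1, 2}],
      ![{0, 1, 2}, {0, 1, 3}], ![{0, 1, 2}, {0, 2, 3}], ![{0, 1, 2}, {0, 1, 2, 3}],
      ![{0, 2, 3}, {1, 2, 3}], ![{0, 2, 3}, {0, 1, 2, 3}], ![{0, 1, 2, 3}, {0, 1, 2, 3}]],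
    [![{0, 2}, {0, 1, 2, 3}], ![{1, 2}, {0, 3}], ![{1, 2}, {0, 1, 3}], ![{1, 2}, {0, 2, 3}],
      ![{1, 2}, {0, 1, 2, 3}], ![{0, 1, 2}, {1, 3}], ![{0, 1, 2}, {0, 1, 3}],
      ![{0, 1, 2}, {0, 2, 3}], ![{0, 1, 2}, {1, 2, 3}], ![{0, 1, 2}, {0, 1, 2, 3}],
      ![{1, 3}, {0, 1, 2, 3}], ![{0, 1, 3}, {1, 2, 3}], ![{0, 1, 3}, {0, 1, 2, 3}],
      ![{0, 1, 2, 3}, {0, 1, 2, 3}]],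
    [![{0, 3}, {1, 2, 3}], ![{0, 1, 3}, {0, 2, 3}]]]

theorem exists_template (A : Fin 3 → Finset (Fin 4)) (hcard : ∀ i, #(A i) = 2)
    (hno : ¬ ∃ a, ∀ i, a ∈ A i) : ∃ (t : Fin 3) (σ : Equiv.Perm (Fin 3)) (f : Equiv.Perm (Fin 4)),
      ∀ i x, f x ∈ template t (σ i) ↔ x ∈ A i := by
  have hpairs : ∀ a ∈ powersetCard 2 (univ : Finset (Fin 4)), ∀ b ∈ powersetCard 2 univ,
      ∀ c ∈ powersetCard 2 univ, a ∩ b ∩ c = ∅ →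
      ∃ (t : Fin 3) (σ : Equiv.Perm (Fin 3)) (f : Equiv.Perm (Fin 4)),
        (∀ x, f x ∈ template t (σ 0) ↔ x ∈ a) ∧ (∀ x, f x ∈ template t (σ 1) ↔ x ∈ b) ∧
          ∀ x, f x ∈ template t (σ 2) ↔ x ∈ c := by
    decide +kernel
  have hmem : ∀ i, A i ∈ powersetCard 2 univ := fun i => mem_powersetCard_univ.2 (hcard i)
  have hempty : A 0 ∩ A 1 ∩ A 2 = ∅ := eq_empty_of_forall_notMem fun a ha =>
    hno ⟨a, by simpa [Fin.forall_fin_succ, and_assoc] using ha⟩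
  simpa [Fin.forall_fin_succ] using hpairs _ (hmem 0) _ (hmem 1) _ (hmem 2) hempty

theorem exists_attachment (t : Fin 3) (B : Fin 2 → Finset (Fin 4)) (h : IsRigid (template t) B 2) :
    ∃ f : Equiv.Perm (Fin 4),
      (∃ σ : Equiv.Perm (Fin 3), ∀ i x, f x ∈ template t (σ i) ↔ x ∈ template t i) ∧
      ∃ B' ∈ attachments t, ∃ e : Equiv.Perm (Fin 2), ∀ p x, f x ∈ B' (e p) ↔ x ∈ B p := by
  have hPQ : ∀ t, ∀ P : Finset (Fin 4), 2 ≤ #P → ∀ Q : Finset (Fin 4), 2 ≤ #Q →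
      IsRigid (template t) ![P, Q] 2 → ∃ f : Equiv.Perm (Fin 4),
        (∃ σ : Equiv.Perm (Fin 3), ∀ i x, f x ∈ template t (σ i) ↔ x ∈ template t i) ∧
        ∃ B' ∈ attachments t, ∃ e : Equiv.Perm (Fin 2), ∀ p x, f x ∈ B' (e p) ↔ x ∈ ![P, Q] p := by
    decide +kernel
  have hB : ![B 0, B 1] = B := by ext i : 1; fin_cases i <;> rfl
  simpa only [hB] using hPQ t _ (h.two_le_card 0) _ (h.two_le_card 1) (by rwa [hB])

theorem exists_perm_compl_singleton (A : Fin 3 → Finset (Fin 3)) (hcard : ∀ i, #(A i) = 2)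
    (hno : ¬ ∃ a, ∀ i, a ∈ A i) : ∃ f : Equiv.Perm (Fin 3), ∀ i, A i = {f i}ᶜ := by
  revert A
  decide +kernel

/-- Neighborhoods `A` and `B` defining a graph `triangleOver A B` with `m + n` vertices besides the
triangle. -/
structure Configuration where
  m : ℕ
  n : ℕ
  A : Fin 3 → Finset (Fin n)
  B : Fin m → Finset (Fin n)

/-- The graph defined by a configuration. -/
abbrev Configuration.graph (C : Configuration) : SimpleGraph (Fin 3 ⊕ Fin C.m ⊕ Fin C.n) :=
  triangleOver C.A C.B

/-- One configuration for each isomorphism class of the classification. -/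
def representatives : List Configuration :=
  ((List.finRange 3).flatMap fun t => (attachments t).map fun B => ⟨2, 4, template t, B⟩) ++
    [⟨3, 3, fun i => {i}ᶜ, fun i => {i}ᶜ⟩]

theorem card_of_mem_representatives :
    ∀ C ∈ representatives, Fintype.card (Fin 3 ⊕ Fin C.m ⊕ Fin C.n) = 9 := by
  simp only [Fintype.card_sum, Fintype.card_fin]
  decide

theorem isRigid_of_mem_representatives : ∀ C ∈ representatives, IsRigid C.A C.B 2 := by
  decide +kernel

theorem maxDeg_of_mem_representatives : ∀ C ∈ representatives, maxDeg C.graph = 4 := by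
  simp only [maxDeg_eq_sup]
  decide +kernel

theorem nodup_sixWalkCount_representatives :
    (representatives.map fun C => sixWalkCount C.graph).Nodup := by
  decide +kernel

theorem exists_iso_of_isRigid_four {A : Fin 3 → Finset (Fin 4)} {B : Fin 2 → Finset (Fin 4)}
    (h : IsRigid A B 2) (hcard : ∀ i, #(A i) = 2) :
    ∃ C ∈ representatives, Nonempty (triangleOver A B ≃g C.graph) := by
  obtain ⟨t, σ, f, hA⟩ := exists_template A hcard h.not_exists_mem_all
  let e : triangleOver A B ≃g triangleOver (template t) fun p => (B p).map f.toEmbedding :=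
    triangleOverIso σ (.refl _) f hA fun p x => by simp
  have hrigid := isUniformlyColorable_triangleOver_iff.1
    ((isUniformlyColorable_triangleOver_iff.2 h).of_iso e)
  obtain ⟨f', ⟨σ', hA'⟩, B', hB', e', hB⟩ := exists_attachment t _ hrigid
  refine ⟨⟨2, 4, template t, B'⟩, ?_, ⟨e.trans (triangleOverIso σ' e' f' hA' hB)⟩⟩
  exact List.mem_append_left _ (List.mem_flatMap.2
    ⟨t, List.mem_finRange t, List.mem_map_of_mem hB'⟩)

theorem exists_iso_of_isRigid_three {ρ : Type*} [Fintype ρ] {A : Fin 3 → Finset (Fin 3)}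
    {B : ρ → Finset (Fin 3)} (h : IsRigid A B 2) (hcard : ∀ i, #(A i) = 2) :
    ∃ C ∈ representatives, Nonempty (triangleOver A B ≃g C.graph) := by
  obtain ⟨f, hA⟩ := exists_perm_compl_singleton A hcard h.not_exists_mem_all
  let e : triangleOver A B ≃g triangleOver (fun i => {i}ᶜ) fun p => (B p).map f.symm.toEmbedding :=
    triangleOverIso (.refl _) (.refl _) f.symm (fun i x => by simp [hA, Equiv.symm_apply_eq])
      fun p x => by simp
  have hrigid := isUniformlyColorable_triangleOver_iff.1
    ((isUniformlyColorable_triangleOver_iff.2 h).of_iso e)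
  obtain ⟨g, hB⟩ := hrigid.exists_equiv_of_compl_singleton
  refine ⟨⟨3, 3, fun i => {i}ᶜ, fun i => {i}ᶜ⟩, List.mem_append_right _ (List.mem_singleton_self _),
    ⟨e.trans (triangleOverIso (.refl _) g (.refl _) (fun _ _ => .rfl) fun p x => ?_)⟩⟩
  rw [hB]
  rfl

theorem exists_iso_of_isRigid {m n : ℕ} {A : Fin 3 → Finset (Fin n)} {B : Fin m → Finset (Fin n)}
    (h : IsRigid A B 2) (hle : ∀ i, #(A i) ≤ 2) (hmn : m + n = 6) :
    ∃ C ∈ representatives, Nonempty (triangleOver A B ≃g C.graph) := by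
  obtain hn | hn := h.card_eq_three_or_four hle (by simpa using hmn) <;>
    rw [Fintype.card_fin] at hn <;> subst hn
  · exact exists_iso_of_isRigid_three h (h.card_eq_two hle)
  · obtain rfl : m = 2 := by omega
    exact exists_iso_of_isRigid_four h (h.card_eq_two hle)

variable {V : Type*} [Fintype V] [DecidableEq V] {G : SimpleGraph V}

theorem exists_iso_representative (hV : Fintype.card V = 9) (hdeg : maxDeg G ≤ 4)
    (h : IsUniformlyColorable G 3 3) {u v : V} {Q : Finset V} (hQ : IsBipartiteOff G {u, v} Q) :
    ∃ C ∈ representatives, Nonempty (G ≃g C.graph) := by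
  obtain ⟨t, R, hR⟩ := exists_isTriangleOver (h.colorable.cliqueFree (Nat.lt_succ_self 3))
    (fun x y R => h.adj_of_isBipartiteOff (Nat.lt_succ_self 2)) hdeg hQ
  obtain ⟨m, n, A, B, ⟨e⟩⟩ := hR.exists_iso_triangleOver
  have hrigid : IsRigid A B 2 := isUniformlyColorable_triangleOver_iff.1 (h.of_iso e)
  have hle : ∀ i, #(A i) ≤ 2 := fun i => Nat.le_of_add_le_add_right <|
    (card_add_two_le_maxDeg A B i).trans (maxDeg_congr e ▸ hdeg)
  have hmn : 3 + (m + n) = 9 := by simpa [hV] using (Fintype.card_congr e.toEquiv).symm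
  obtain ⟨C, hC, ⟨e'⟩⟩ := exists_iso_of_isRigid hrigid hle (by omega)
  exact ⟨C, hC, ⟨e.trans e'⟩⟩

theorem parameters_of_iso_representative (hV : Fintype.card V = 9) {C : Configuration}
    (hC : C ∈ representatives) (e : C.graph ≃g G) :
    maxDeg G = 4 ∧ chi G = 3 ∧ ivsChi G = 3 ∧ vsChi G = 2 := by
  obtain ⟨Q, hQ⟩ := exists_isBipartiteOff_triangleOver C.A C.B
  have hunif := isUniformlyColorable_triangleOver_iff.2 (isRigid_of_mem_representatives C hC)
  have hQ' := hQ.map e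
  rw [map_insert, map_singleton] at hQ'
  exact ⟨maxDeg_congr e ▸ maxDeg_of_mem_representatives C hC,
    (chi_ivsChi_vsChi_eq_iff (by omega) hV).2 ⟨hunif.of_iso e, _, _, _, hQ'⟩⟩

end Classification

/-- There are exactly `30` isomorphism classes of graphs on `9` vertices with `Δ = 4`,
`χ = 3`, `ivs_χ = 3` and `vs_χ = 2`: there is a family of `30` pairwise non-isomorphic
such graphs so that every such graph is isomorphic to a member of the family. -/
theorem stmt_12 :
    ∃ f : Fin 30 → SimpleGraph (Fin 9),
      (∀ i, maxDeg (f i) = 4 ∧ chi (f i) = 3 ∧ ivsChi (f i) = 3 ∧ vsChi (f i) = 2) ∧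
      (∀ i j, i ≠ j → IsEmpty (f i ≃g f j)) ∧
      (∀ G : SimpleGraph (Fin 9),
        maxDeg G = 4 ∧ chi G = 3 ∧ ivsChi G = 3 ∧ vsChi G = 2 →
        ∃ i, Nonempty (G ≃g f i)) := by
  have hlength : representatives.length = 30 := rfl
  let C (i : Fin 30) : Configuration := representatives.get (i.cast hlength.symm)
  have hmem : ∀ i, C i ∈ representatives := fun i => representatives.get_mem _
  let f (i : Fin 30) : SimpleGraph (Fin 9) :=
    (C i).graph.overFin (card_of_mem_representatives _ (hmem i))
  let e (i : Fin 30) : (C i).graph ≃g f i := (C i).graph.overFinIso _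
  refine ⟨f, fun i => parameters_of_iso_representative (by simp) (hmem i) (e i),
    fun i j hij => ⟨fun g => hij ?_⟩, fun G ⟨hdeg, hG⟩ => ?_⟩
  · have hwalks := sixWalkCount_congr (((e i).trans g).trans (e j).symm)
    have hget : C i = C j :=
      List.inj_on_of_nodup_map nodup_sixWalkCount_representatives (hmem i) (hmem j) hwalks
    exact Fin.cast_injective _ ((nodup_sixWalkCount_representatives.of_map _).injective_get hget)
  · obtain ⟨hunif, u, v, Q, hQ⟩ := (chi_ivsChi_vsChi_eq_iff (by omega) (by simp)).1 hG
    obtain ⟨C', hC', ⟨g⟩⟩ := exists_iso_representative (by simp) hdeg.le hunif hQ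
    obtain ⟨i, rfl⟩ := List.get_of_mem hC'
    exact ⟨i.cast hlength, ⟨g.trans (e (i.cast hlength))⟩⟩
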